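/- Every multiarrangement (A,m) of rank 2 is free, and for a rank-2 multiarrangement with |A| = 2 hyperplanes H_1, H_2 the exponents are (m(H_1), m(H_2)). -/

import Mathlib

open scoped Classical
open MvPolynomial

namespace ArrPaper

variable {K : Type*} [Field K] {ℓ : ℕ}

/-- The coordinate ring `S = K[x₁,…,x_ℓ]`. -/
noncomputable abbrev S (K : Type*) [Field K] (ℓ : ℕ) := MvPolynomial (Fin ℓ) K

/-- The linear form associated to a covector `c`. -/
noncomputable def linForm (c : Fin ℓ → K) : S K ℓ :=
  ∑ i, MvPolynomial.C (c i) * MvPolynomial.X i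

/-- The linear functional associated to a covector. -/
noncomputable def toFunc (c : Fin ℓ → K) : (Fin ℓ → K) →ₗ[K] K :=
  ∑ i, c i • LinearMap.proj i

/-- A (central) hyperplane arrangement, given by a finite set of nonzero,
pairwise non-proportional covectors (defining linear forms). -/
structure Arrangement (K : Type*) [Field K] (ℓ : ℕ) where
  hyps : Finset (Fin ℓ → K)
  ne_zero : ∀ c ∈ hyps, c ≠ 0
  nonparallel : ∀ c ∈ hyps, ∀ c' ∈ hyps, c ≠ c' → ∀ t : K, c' ≠ t • c

/-- Derivations of the polynomial ring `S`. -/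
abbrev Der (K : Type*) [Field K] (ℓ : ℕ) := Derivation K (S K ℓ) (S K ℓ)

/-- `θ` is a logarithmic derivation of the multiarrangement `(A, m)`, i.e.
`θ(α_H) ∈ α_H^{m(H)}·S` for all `H ∈ A`. -/
def IsLogDer (A : Arrangement K ℓ) (m : (Fin ℓ → K) → ℕ) (θ : Der K ℓ) : Prop :=
  ∀ c ∈ A.hyps, (linForm c) ^ (m c) ∣ θ (linForm c)

/-- `θ` is homogeneous of polynomial degree `d`: `θ(α)` is homogeneous of degree `d`
for every linear form `α`. -/
def IsHomogOfDeg (θ : Der K ℓ) (d : ℕ) : Prop :=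
  ∀ c : Fin ℓ → K, (θ (linForm c)).IsHomogeneous d

/-- `θ₁, …, θ_ℓ` form a basis of the `S`-module `D(A,m)`. -/
def IsDerBasis (A : Arrangement K ℓ) (m : (Fin ℓ → K) → ℕ) (θ : Fin ℓ → Der K ℓ) : Prop :=
  (∀ i, IsLogDer A m (θ i)) ∧
  ∀ η : Der K ℓ, IsLogDer A m η → ∃! f : Fin ℓ → S K ℓ, η = ∑ i, f i • θ i

/-- `(A,m)` is free with a homogeneous basis of degrees (exponents) `d`. -/
def IsFreeWithExp (A : Arrangement K ℓ) (m : (Fin ℓ → K) → ℕ) (d : Fin ℓ → ℕ) : Prop :=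
  ∃ θ : Fin ℓ → Der K ℓ, (∀ i, IsHomogOfDeg (θ i) (d i)) ∧ IsDerBasis A m θ

/-- `(A,m)` is a free multiarrangement. -/
def IsFree (A : Arrangement K ℓ) (m : (Fin ℓ → K) → ℕ) : Prop :=
  ∃ d : Fin ℓ → ℕ, IsFreeWithExp A m d

/-- `|m|`, the total multiplicity. -/
def msum (A : Arrangement K ℓ) (m : (Fin ℓ → K) → ℕ) : ℕ := ∑ c ∈ A.hyps, m c

/-- The rank of an arrangement: the dimension of the span of its covectors. -/
noncomputable def rank (A : Arrangement K ℓ) : ℕ :=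
  Module.finrank K (Submodule.span K (A.hyps : Set (Fin ℓ → K)))

/-- `A` is reducible: after a linear change of coordinates it is a product of two
arrangements in complementary (nonzero) subspaces.  In terms of covectors: the
covectors split between two complementary nonzero subspaces of the dual space. -/
def Reducible (A : Arrangement K ℓ) : Prop :=
  ∃ W₁ W₂ : Submodule K (Fin ℓ → K), W₁ ≠ ⊥ ∧ W₂ ≠ ⊥ ∧ W₁ ⊓ W₂ = ⊥ ∧ W₁ ⊔ W₂ = ⊤ ∧
    ∀ c ∈ A.hyps, c ∈ W₁ ∨ c ∈ W₂

/-- The hyperplanes of the localization at a flat; the flat of codimension `r` is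
encoded by the `r`-dimensional subspace `U` of the dual space spanned by the
covectors of the hyperplanes containing it. -/
noncomputable def locHyps (A : Arrangement K ℓ) (U : Submodule K (Fin ℓ → K)) :
    Finset (Fin ℓ → K) :=
  A.hyps.filter (· ∈ U)

/-- `U` encodes a flat of `A` of codimension `r` (an element of `L_r(A)`). -/
def IsFlatOfRank (A : Arrangement K ℓ) (U : Submodule K (Fin ℓ → K)) (r : ℕ) : Prop :=
  Module.finrank K U = r ∧ Submodule.span K (locHyps A U : Set (Fin ℓ → K)) = U

/-- The localization `A_X` of `A` at the flat encoded by `U`. -/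
noncomputable def localize (A : Arrangement K ℓ) (U : Submodule K (Fin ℓ → K)) :
    Arrangement K ℓ where
  hyps := locHyps A U
  ne_zero := fun c hc => A.ne_zero c (Finset.mem_filter.mp hc).1
  nonparallel := fun c hc c' hc' =>
    A.nonparallel c (Finset.mem_filter.mp hc).1 c' (Finset.mem_filter.mp hc').1

/-- `H₀` (given by covector `c₀`) is a heavy hyperplane of `(A,m)`. -/
def IsHeavy (A : Arrangement K ℓ) (m : (Fin ℓ → K) → ℕ) (c₀ : Fin ℓ → K) : Prop :=
  c₀ ∈ A.hyps ∧ (∑ c ∈ A.hyps.erase c₀, m c) ≤ m c₀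

/-- `H₀` (given by covector `c₀`) is a locally heavy hyperplane of `(A,m)`. -/
def IsLocallyHeavy (A : Arrangement K ℓ) (m : (Fin ℓ → K) → ℕ) (c₀ : Fin ℓ → K) : Prop :=
  c₀ ∈ A.hyps ∧ ∀ U : Submodule K (Fin ℓ → K), IsFlatOfRank A U 2 → c₀ ∈ U →
    3 ≤ (locHyps A U).card → (∑ c ∈ (locHyps A U).erase c₀, m c) ≤ m c₀

/-- `b` is the second Betti number of the rank-2 localization of `(A,m)` at `U`:
the product of the nonzero exponents of this free rank-2 multiarrangement. -/
def IsLocalB2 (A : Arrangement K ℓ) (m : (Fin ℓ → K) → ℕ)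
    (U : Submodule K (Fin ℓ → K)) (b : ℕ) : Prop :=
  ∃ d : Fin ℓ → ℕ, IsFreeWithExp (localize A U) m d ∧
    b = ∏ i ∈ Finset.univ.filter (fun i => d i ≠ 0), d i

/-- `b` is the second Betti number `b₂(A,m)` of the multiarrangement `(A,m)`. -/
def IsB2 (A : Arrangement K ℓ) (m : (Fin ℓ → K) → ℕ) (b : ℕ) : Prop :=
  ∃ bloc : Submodule K (Fin ℓ → K) → ℕ,
    (∀ U, IsFlatOfRank A U 2 → IsLocalB2 A m U (bloc U)) ∧
    b = ∑ᶠ U ∈ {U : Submodule K (Fin ℓ → K) | IsFlatOfRank A U 2}, bloc U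

/-- The second Betti number of a simple arrangement:
`b₂(A) = Σ_{X ∈ L₂(A)} (|A_X| - 1)`. -/
noncomputable def b2Simple (A : Arrangement K ℓ) : ℕ :=
  ∑ᶠ U ∈ {U : Submodule K (Fin ℓ → K) | IsFlatOfRank A U 2}, ((locHyps A U).card - 1)

/-- The Euler–Ziegler multiplicity of the restricted hyperplane `H₀ ∩ ker(c)` of
`A^{H₀}`: `m^{H₀}(X) = |m_X| - m(H₀)`. -/
noncomputable def EZmult (A : Arrangement K ℓ) (m : (Fin ℓ → K) → ℕ)
    (c₀ c : Fin ℓ → K) : ℕ :=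
  (∑ c' ∈ A.hyps.filter (· ∈ Submodule.span K ({c₀, c} : Set (Fin ℓ → K))), m c') - m c₀

/-- Two covectors are parallel (define the same hyperplane). -/
def Parallel {n : ℕ} (b b' : Fin n → K) : Prop := ∃ t : K, t ≠ 0 ∧ b' = t • b

/-- The covector on `K^n` obtained by restricting the covector `c` on `K^{n+1}` to the
hyperplane `ker c₀`, transported by the linear isomorphism `e : ker c₀ ≃ K^n`. -/
noncomputable def resCov {n : ℕ} (c₀ : Fin (n+1) → K)
    (e : ↥(LinearMap.ker (toFunc c₀)) ≃ₗ[K] (Fin n → K)) (c : Fin (n+1) → K) :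
    Fin n → K :=
  fun j => toFunc c ((e.symm (Pi.single j 1) : ↥(LinearMap.ker (toFunc c₀))) : Fin (n+1) → K)

/-- `(B, mB)` is (a model, in coordinates, of) the Euler–Ziegler restriction
`(A^{H₀}, m^{H₀})` of `(A,m)` to the hyperplane `H₀ = ker c₀ ∈ A`. -/
def IsEZRes {n : ℕ} (A : Arrangement K (n+1)) (m : (Fin (n+1) → K) → ℕ)
    (c₀ : Fin (n+1) → K) (B : Arrangement K n) (mB : (Fin n → K) → ℕ) : Prop :=
  c₀ ∈ A.hyps ∧
  ∃ e : ↥(LinearMap.ker (toFunc c₀)) ≃ₗ[K] (Fin n → K),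
    (∀ c ∈ A.hyps.erase c₀, ∃ b ∈ B.hyps,
        Parallel b (resCov c₀ e c) ∧ mB b = EZmult A m c₀ c) ∧
    (∀ b ∈ B.hyps, ∃ c ∈ A.hyps.erase c₀, Parallel b (resCov c₀ e c))

/-- A combinatorial equivalence between two arrangements: a bijection between the
hyperplanes inducing an isomorphism of intersection lattices (it preserves the rank
of every subset of hyperplanes). -/
def CombEquiv (A A' : Arrangement K ℓ) : Prop :=
  ∃ φ : (Fin ℓ → K) → (Fin ℓ → K), Set.BijOn φ ↑A.hyps ↑A'.hyps ∧
    ∀ T : Finset (Fin ℓ → K), T ⊆ A.hyps →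
      Module.finrank K (Submodule.span K (T : Set (Fin ℓ → K))) =
      Module.finrank K (Submodule.span K ((T.image φ) : Set (Fin ℓ → K)))

/-- `linForm` as a linear map. -/
noncomputable def linFormHom : (Fin ℓ → K) →ₗ[K] S K ℓ where
  toFun := linForm
  map_add' c c' := by simp [linForm, add_mul, Finset.sum_add_distrib]
  map_smul' t c := by simp [linForm, Finset.mul_sum, mul_assoc, smul_eq_C_mul]

lemma linForm_single (i : Fin ℓ) : linForm (Pi.single i (1 : K)) = X i := by
  rw [linForm, Finset.sum_eq_single i] <;> simp +contextual

lemma isHomogeneous_linForm (c : Fin ℓ → K) : (linForm c).IsHomogeneous 1 :=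
  IsHomogeneous.sum _ _ _ fun _ _ => isHomogeneous_C_mul_X _ _

lemma eval_linForm (f : (Fin ℓ → K) →ₗ[K] K) (c : Fin ℓ → K) :
    eval (fun i => f (Pi.single i 1)) (linForm c) = f c := by
  conv_rhs => rw [← Finset.univ_sum_single c, map_sum]
  simp only [linForm, map_sum, map_mul, eval_C, eval_X]
  refine Finset.sum_congr rfl fun i _ => ?_
  rw [← smul_eq_mul, ← map_smul]
  congr 1
  ext j
  simp [Pi.single_apply]

lemma prime_linForm {c : Fin ℓ → K} (hc : c ≠ 0) : Prime (linForm c) := by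
  have h : linForm c = sumSMulX (Finsupp.equivFunOnFinite.symm c) := by
    simp [linForm, sumSMulX, Finsupp.linearCombination_apply, Finsupp.sum_fintype, smul_eq_C_mul]
  obtain ⟨i, hi⟩ := Function.ne_iff.mp hc
  rw [h]
  refine (irreducible_sumSMulX _ (Finsupp.support_nonempty_iff.mpr fun h0 => hi ?_) fun r hr => ?_).prime
  · simpa using DFunLike.congr_fun h0 i
  have := hr i
  refine isUnit_iff_ne_zero.mpr ?_
  rintro rfl
  exact hi (by simpa using this)

lemma not_linForm_dvd {c c' : Fin ℓ → K} (h : c' ∉ K ∙ c) {a : K} (ha : a ≠ 0) (k : ℕ) :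
    ¬ linForm c ∣ C a * linForm c' ^ k := by
  obtain ⟨f, hf, hle⟩ := Submodule.exists_le_ker_of_notMem h
  have hc : f c = 0 := hle (Submodule.mem_span_singleton_self c)
  rintro ⟨q, hq⟩
  have := congrArg (eval fun i => f (Pi.single i 1)) hq
  simp only [map_mul, map_pow, eval_C, eval_linForm, hc, zero_mul] at this
  exact mul_ne_zero ha (pow_ne_zero k hf) this

lemma isHomogeneous_of_mem_pow {W : Submodule K (Fin ℓ → K)} {k : ℕ} {p : S K ℓ}
    (hp : p ∈ W.map linFormHom ^ k) : p.IsHomogeneous k := by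
  have h1 : W.map linFormHom ≤ homogeneousSubmodule (Fin ℓ) K 1 := by
    rintro _ ⟨c, -, rfl⟩
    exact isHomogeneous_linForm c
  have := pow_le_pow_left' h1 k hp
  rw [homogeneousSubmodule_one_pow] at this
  exact this

/-- A form of positive degree in two linear forms is, modulo the first one, a multiple of a
power of the second. -/
lemma exists_eq_mul_add_of_mem_pow (c c' : Fin ℓ → K) (k : ℕ) {p : S K ℓ}
    (hp : p ∈ (Submodule.span K {c, c'}).map linFormHom ^ (k + 1)) :
    ∃ q ∈ (Submodule.span K {c, c'}).map linFormHom ^ k, ∃ a : K,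
      p = linForm c * q + C a * linForm c' ^ (k + 1) := by
  set U := (Submodule.span K {c, c'}).map linFormHom
  have hc' : linForm c' ∈ U := ⟨c', Submodule.subset_span (by simp), rfl⟩
  have hlin : ∀ u ∈ U, ∃ s t : K, u = C s * linForm c + C t * linForm c' := by
    rintro _ ⟨d, hd, rfl⟩
    obtain ⟨s, t, rfl⟩ := Submodule.mem_span_pair.mp hd
    exact ⟨s, t, by rw [map_add, map_smul, map_smul, smul_eq_C_mul, smul_eq_C_mul]; rfl⟩
  have hC : ∀ (j : ℕ) (a : K) {q : S K ℓ}, q ∈ U ^ j → C a * q ∈ U ^ j := fun j a q hq => by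
    rw [← smul_eq_C_mul]; exact Submodule.smul_mem _ _ hq
  have hw : ∀ j, linForm c' ^ j ∈ U ^ j := fun j => Submodule.pow_mem_pow _ hc' j
  induction k generalizing p with
  | zero =>
    rw [zero_add, pow_one] at hp
    obtain ⟨s, t, rfl⟩ := hlin p hp
    refine ⟨C s, ?_, t, by ring⟩
    simp
  | succ k ih =>
    rw [pow_succ'] at hp
    refine Submodule.mul_induction_on hp ?_ ?_
    · intro u hu n hn
      obtain ⟨s, t, rfl⟩ := hlin u hu
      obtain ⟨q, hq, a, rfl⟩ := ih hn
      refine ⟨C s * (linForm c * q + C a * linForm c' ^ (k + 1)) + C t * (linForm c' * q),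
        Submodule.add_mem _ (hC _ _ hn) (hC _ _ ?_), t * a, ?_⟩
      · rw [pow_succ']; exact Submodule.mul_mem_mul hc' hq
      · rw [C_mul]; ring
    · rintro _ _ ⟨q, hq, a, rfl⟩ ⟨q', hq', a', rfl⟩
      exact ⟨q + q', Submodule.add_mem _ hq hq', a + a', by rw [C_add]; ring⟩

/-- Dividing a form in two linear forms by a power of the first one leaves either a multiple of
the first one or, modulo it, a nonzero multiple of a power of the second. -/
lemma dvd_or_exists_of_pow_mul_mem {c c' : Fin ℓ → K} (hc : c ≠ 0) (h : c' ∉ K ∙ c) (n k : ℕ)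
    {g : S K ℓ} (hg : linForm c ^ n * g ∈ (Submodule.span K {c, c'}).map linFormHom ^ k) :
    linForm c ∣ g ∨ n ≤ k ∧ ∃ a : K, a ≠ 0 ∧ linForm c ∣ g - C a * linForm c' ^ (k - n) := by
  induction n generalizing k with
  | zero =>
    rw [pow_zero, one_mul] at hg
    cases k with
    | zero =>
      obtain ⟨a, rfl⟩ := Submodule.mem_one.mp (by rwa [pow_zero] at hg)
      rcases eq_or_ne a 0 with rfl | ha
      · exact Or.inl (by simp)
      · exact Or.inr ⟨le_rfl, a, ha, by simp [algebraMap_eq]⟩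
    | succ k =>
      obtain ⟨q, -, a, rfl⟩ := exists_eq_mul_add_of_mem_pow c c' k hg
      rcases eq_or_ne a 0 with rfl | ha
      · exact Or.inl (by simp)
      · exact Or.inr ⟨Nat.zero_le _, a, ha, by simp⟩
  | succ n ih =>
    have hdvd : linForm c ∣ linForm c ^ (n + 1) * g :=
      Dvd.intro _ (by rw [pow_succ', mul_assoc])
    cases k with
    | zero =>
      obtain ⟨a, ha⟩ := Submodule.mem_one.mp (by rwa [pow_zero] at hg)
      rw [← ha] at hdvd
      rcases eq_or_ne a 0 with rfl | ha'
      · rw [map_zero] at ha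
        have := (mul_eq_zero.mp ha.symm).resolve_left (pow_ne_zero _ (prime_linForm hc).ne_zero)
        exact Or.inl (by simp [this])
      · exact absurd (by simpa [algebraMap_eq] using hdvd) (not_linForm_dvd h ha' 0)
    | succ k =>
      obtain ⟨q, hq, a, hqa⟩ := exists_eq_mul_add_of_mem_pow c c' k hg
      have ha : a = 0 := by
        by_contra ha
        rw [hqa] at hdvd
        exact not_linForm_dvd h ha _ ((dvd_add_right (dvd_mul_right _ _)).mp hdvd)
      have : linForm c ^ n * g = q := by
        refine mul_left_cancel₀ (prime_linForm hc).ne_zero ?_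
        rw [← mul_assoc, ← pow_succ', hqa, ha]; simp
      rcases ih k (this ▸ hq) with h0 | ⟨hn, hk⟩
      · exact Or.inl h0
      · exact Or.inr ⟨by omega, by simpa using hk⟩

/-- The derivations dual to a basis of covectors. -/
noncomputable def dualDer (b : Module.Basis (Fin ℓ) K (Fin ℓ → K)) (i : Fin ℓ) : Der K ℓ :=
  mkDerivation K fun k => C (b.coord i (Pi.single k 1))

lemma derivation_linForm (θ : Der K ℓ) (c : Fin ℓ → K) :
    θ (linForm c) = ∑ i, C (c i) * θ (X i) := by
  simp [linForm, map_sum, Derivation.leibniz, smul_eq_mul]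

lemma dualDer_linForm (b : Module.Basis (Fin ℓ) K (Fin ℓ → K)) (i : Fin ℓ) (c : Fin ℓ → K) :
    dualDer b i (linForm c) = C (b.coord i c) := by
  rw [← eval_linForm (b.coord i) c, derivation_linForm]
  simp [dualDer, linForm, mkDerivation_X, map_sum]

lemma der_ext_basis (b : Module.Basis (Fin ℓ) K (Fin ℓ → K)) {θ η : Der K ℓ}
    (h : ∀ i, θ (linForm (b i)) = η (linForm (b i))) : θ = η := by
  have : θ.toLinearMap ∘ₗ linFormHom = η.toLinearMap ∘ₗ linFormHom := b.ext h
  refine derivation_ext fun i => ?_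
  rw [← linForm_single]
  exact LinearMap.congr_fun this _

/-- If the logarithmic condition only involves the members of a basis of covectors, then suitable
multiples of the dual derivations form a basis. -/
lemma isDerBasis_dualDer {A : Arrangement K ℓ} {m : (Fin ℓ → K) → ℕ}
    (b : Module.Basis (Fin ℓ) K (Fin ℓ → K)) (n : Fin ℓ → ℕ)
    (h : ∀ η : Der K ℓ, IsLogDer A m η ↔ ∀ i, linForm (b i) ^ n i ∣ η (linForm (b i))) :
    IsDerBasis A m fun i => linForm (b i) ^ n i • dualDer b i := by
  have hval : ∀ (f : Fin ℓ → S K ℓ) (j : Fin ℓ),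
      (∑ i, f i • linForm (b i) ^ n i • dualDer b i : Der K ℓ) (linForm (b j)) =
        f j * linForm (b j) ^ n j := by
    intro f j
    rw [← Derivation.coeFnAddMonoidHom_apply, map_sum, Finset.sum_apply, Finset.sum_eq_single j]
    · simp [dualDer_linForm]
    · intro i _ hij
      simp [dualDer_linForm, hij.symm]
    · simp
  refine ⟨fun i => (h _).mpr fun j => ?_, fun η hη => ?_⟩
  · rcases eq_or_ne i j with rfl | hij
    · simp
    · simp [dualDer_linForm, hij.symm]
  · choose f hf using (h η).mp hη
    refine ⟨f, der_ext_basis b fun j => ?_, fun f' hf' => funext fun j => ?_⟩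
    · rw [hval, hf, mul_comm]
    · have hne : linForm (b j) ^ n j ≠ 0 := pow_ne_zero _ (prime_linForm (b.ne_zero j)).ne_zero
      refine mul_right_cancel₀ hne ?_
      rw [← hval f' j, ← hf', hf, mul_comm]

lemma isHomogOfDeg_dualDer (b : Module.Basis (Fin ℓ) K (Fin ℓ → K)) (n : ℕ) (i : Fin ℓ) :
    IsHomogOfDeg (linForm (b i) ^ n • dualDer b i) n := fun c => by
  rw [Derivation.smul_apply, dualDer_linForm, smul_eq_mul]
  simpa using ((isHomogeneous_linForm (b i)).pow n).mul (isHomogeneous_C (Fin ℓ) (b.coord i c))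

/-- A homogeneous basis of `D(A,m)` whose values on the arrangement are forms in the covectors of
the arrangement. -/
structure IsGoodBasis (A : Arrangement K ℓ) (m : (Fin ℓ → K) → ℕ) (d : Fin ℓ → ℕ)
    (θ : Fin ℓ → Der K ℓ) : Prop where
  homog : ∀ i, IsHomogOfDeg (θ i) (d i)
  basis : IsDerBasis A m θ
  mem_pow : ∀ i, ∀ c ∈ A.hyps, θ i (linForm c) ∈
    (Submodule.span K (A.hyps : Set (Fin ℓ → K))).map linFormHom ^ d i

lemma isGoodBasis_dualDer {A : Arrangement K ℓ} {m : (Fin ℓ → K) → ℕ}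
    (hm : ∀ c ∈ A.hyps, m c = 0) :
    IsGoodBasis A m (fun _ => 0) (dualDer (Pi.basisFun K (Fin ℓ))) where
  homog i := by simpa using isHomogOfDeg_dualDer (Pi.basisFun K (Fin ℓ)) 0 i
  basis := by
    have := isDerBasis_dualDer (A := A) (m := m) (Pi.basisFun K (Fin ℓ)) (fun _ => 0)
      fun η => by simp +contextual [IsLogDer, hm]
    simpa using this
  mem_pow i c _ := by
    rw [dualDer_linForm, pow_zero]
    exact Submodule.mem_one.mpr ⟨_, rfl⟩

lemma sum_smul_der_apply (f : Fin ℓ → S K ℓ) (θ : Fin ℓ → Der K ℓ) (p : S K ℓ) :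
    (∑ i, f i • θ i : Der K ℓ) p = ∑ i, f i * θ i p := by
  rw [← Derivation.coeFnAddMonoidHom_apply, map_sum, Finset.sum_apply]
  rfl

lemma isLogDer_update_iff {A : Arrangement K ℓ} {m : (Fin ℓ → K) → ℕ} {c : Fin ℓ → K}
    (hc : c ∈ A.hyps) {θ : Der K ℓ} :
    IsLogDer A (Function.update m c (m c + 1)) θ ↔
      IsLogDer A m θ ∧ linForm c ^ (m c + 1) ∣ θ (linForm c) := by
  constructor
  · refine fun h => ⟨fun c' hc' => ?_, by simpa using h c hc⟩
    rcases eq_or_ne c' c with rfl | hne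
    · exact (pow_dvd_pow _ (Nat.le_succ _)).trans (by simpa using h c' hc')
    · simpa [hne] using h c' hc'
  · rintro ⟨h, h'⟩ c' hc'
    rcases eq_or_ne c' c with rfl | hne
    · simpa using h'
    · simpa [hne] using h c' hc'

/-- The elementary change of basis when the multiplicity of one hyperplane is raised by one. -/
noncomputable def stepBasis (θ : Fin ℓ → Der K ℓ) (i₀ : Fin ℓ) (α : S K ℓ) (s : Fin ℓ → S K ℓ)
    (i : Fin ℓ) : Der K ℓ :=
  if i = i₀ then α • θ i₀ else θ i - s i • θ i₀

lemma sum_smul_stepBasis (θ : Fin ℓ → Der K ℓ) (i₀ : Fin ℓ) (α : S K ℓ) (s f : Fin ℓ → S K ℓ) :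
    ∑ i, f i • stepBasis θ i₀ α s i =
      ∑ i, Function.update f i₀
        (α * f i₀ - ∑ j ∈ Finset.univ.erase i₀, f j * s j) i • θ i := by
  rw [← Finset.add_sum_erase _ _ (Finset.mem_univ i₀),
    ← Finset.add_sum_erase (a := i₀) _ (fun i => Function.update f i₀ _ i • θ i)
      (Finset.mem_univ i₀)]
  have h1 : ∑ i ∈ Finset.univ.erase i₀, f i • stepBasis θ i₀ α s i =
      ∑ i ∈ Finset.univ.erase i₀, f i • θ i
        - (∑ i ∈ Finset.univ.erase i₀, f i * s i) • θ i₀ := by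
    rw [Finset.sum_smul, ← Finset.sum_sub_distrib]
    refine Finset.sum_congr rfl fun i hi => ?_
    rw [stepBasis, if_neg (Finset.ne_of_mem_erase hi), smul_sub, mul_smul]
  have h2 : ∑ i ∈ Finset.univ.erase i₀, Function.update f i₀
        (α * f i₀ - ∑ j ∈ Finset.univ.erase i₀, f j * s j) i • θ i =
      ∑ i ∈ Finset.univ.erase i₀, f i • θ i :=
    Finset.sum_congr rfl fun i hi => by
      rw [Function.update_of_ne (Finset.ne_of_mem_erase hi)]
  rw [h1, h2, stepBasis, if_pos rfl, Function.update_self]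
  refine Derivation.ext fun p => ?_
  simp only [Derivation.add_apply, Derivation.sub_apply, Derivation.smul_apply, smul_eq_mul]
  ring

lemma isDerBasis_stepBasis {A : Arrangement K ℓ} {m : (Fin ℓ → K) → ℕ} {θ : Fin ℓ → Der K ℓ}
    (hθ : IsDerBasis A m θ) {c : Fin ℓ → K} (hc : c ∈ A.hyps) {g : Fin ℓ → S K ℓ}
    (hg : ∀ i, θ i (linForm c) = linForm c ^ m c * g i) {i₀ : Fin ℓ} (hi₀ : ¬ linForm c ∣ g i₀)
    {s : Fin ℓ → S K ℓ} (hs : ∀ i ≠ i₀, linForm c ∣ g i - s i * g i₀) :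
    IsDerBasis A (Function.update m c (m c + 1)) (stepBasis θ i₀ (linForm c) s) := by
  have hα := prime_linForm (A.ne_zero c hc)
  refine ⟨fun i => (isLogDer_update_iff hc).mpr ?_, fun η hη => ?_⟩
  · by_cases hi : i = i₀
    · simp only [stepBasis, if_pos hi]
      refine ⟨fun c' hc' => (hθ.1 i₀ c' hc').mul_left _, ?_⟩
      rw [Derivation.smul_apply, smul_eq_mul, hg, pow_succ', ← mul_assoc]
      exact dvd_mul_right _ _
    · simp only [stepBasis, if_neg hi]
      refine ⟨fun c' hc' => dvd_sub (hθ.1 i c' hc') ((hθ.1 i₀ c' hc').mul_left _), ?_⟩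
      have : (θ i - s i • θ i₀) (linForm c) = linForm c ^ m c * (g i - s i * g i₀) := by
        rw [Derivation.sub_apply, Derivation.smul_apply, smul_eq_mul, hg, hg]; ring
      rw [this, pow_succ]
      exact mul_dvd_mul_left _ (hs i hi)
  · obtain ⟨hη, hηc⟩ := (isLogDer_update_iff hc).mp hη
    obtain ⟨f, hf, huniq⟩ := hθ.2 η hη
    have hdvd : linForm c ∣ f i₀ + ∑ j ∈ Finset.univ.erase i₀, f j * s j := by
      refine (hα.dvd_or_dvd (b := g i₀) ?_).resolve_right hi₀
      have h1 : η (linForm c) = linForm c ^ m c * ∑ i, f i * g i := by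
        rw [hf, sum_smul_der_apply, Finset.mul_sum]
        exact Finset.sum_congr rfl fun i _ => by rw [hg]; ring
      rw [h1, pow_succ] at hηc
      have h2 := (mul_dvd_mul_iff_left (pow_ne_zero _ hα.ne_zero)).mp hηc
      have h3 : linForm c ∣ ∑ j ∈ Finset.univ.erase i₀, f j * (g j - s j * g i₀) :=
        Finset.dvd_sum fun j hj => (hs j (Finset.ne_of_mem_erase hj)).mul_left _
      convert dvd_sub h2 h3 using 1
      rw [← Finset.add_sum_erase _ _ (Finset.mem_univ i₀), add_sub_assoc,
        ← Finset.sum_sub_distrib, add_mul, Finset.sum_mul]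
      congr 1
      exact Finset.sum_congr rfl fun j _ => by ring
    obtain ⟨q, hq⟩ := hdvd
    have herase : ∀ x y : Fin ℓ → S K ℓ, (∀ j ≠ i₀, x j = y j) →
        ∑ j ∈ Finset.univ.erase i₀, x j * s j = ∑ j ∈ Finset.univ.erase i₀, y j * s j :=
      fun x y hxy => Finset.sum_congr rfl fun j hj => by rw [hxy j (Finset.ne_of_mem_erase hj)]
    refine ⟨Function.update f i₀ q, ?_, fun f' hf' => ?_⟩
    · simp only
      rw [sum_smul_stepBasis, Function.update_idem, Function.update_self,
        herase _ f fun j hj => Function.update_of_ne hj _ _, ← hq, add_sub_cancel_right,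
        Function.update_eq_self, hf]
    · simp only at hf'
      rw [sum_smul_stepBasis] at hf'
      have h := huniq _ hf'
      have hne : ∀ j ≠ i₀, f' j = f j := fun j hj => by
        rw [← h, Function.update_of_ne hj]
      funext i
      by_cases hi : i = i₀
      · subst hi
        have hi := congrFun h i
        rw [Function.update_self, herase f' f hne, sub_eq_iff_eq_add, hq] at hi
        rw [Function.update_self]
        exact mul_left_cancel₀ hα.ne_zero hi
      · rw [Function.update_of_ne hi, hne i hi]

lemma exists_span_pair {A : Arrangement K ℓ} (hr : rank A = 2) {c : Fin ℓ → K}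
    (hc : c ∈ A.hyps) : ∃ c' ∈ A.hyps, c' ∉ K ∙ c ∧
      Submodule.span K (A.hyps : Set (Fin ℓ → K)) = Submodule.span K {c, c'} := by
  have : ∃ c' ∈ A.hyps, c' ∉ K ∙ c := by
    by_contra! hcon
    have h1 := Submodule.finrank_mono (Submodule.span_le.mpr hcon)
    have h2 := finrank_span_le_card (R := K) ({c} : Set (Fin ℓ → K))
    have h3 : Module.finrank K (Submodule.span K (A.hyps : Set (Fin ℓ → K))) = 2 := hr
    simp at h2
    omega
  obtain ⟨c', hc', hnot⟩ := this
  refine ⟨c', hc', hnot, (Submodule.eq_of_le_of_finrank_eq (Submodule.span_mono ?_) ?_).symm⟩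
  · rintro x (rfl | rfl) <;> assumption
  · have hli : LinearIndependent K ![c, c'] :=
      (LinearIndependent.pair_iff' (A.ne_zero c hc)).mpr fun a ha =>
        hnot (Submodule.mem_span_singleton.mpr ⟨a, ha⟩)
    have h := finrank_span_eq_card hli
    rw [Matrix.range_cons_cons_empty] at h
    rw [h]
    exact hr.symm

lemma IsGoodBasis.exists_update {A : Arrangement K ℓ} {m : (Fin ℓ → K) → ℕ} {d : Fin ℓ → ℕ}
    {θ : Fin ℓ → Der K ℓ} (h : IsGoodBasis A m d θ) (hr : rank A = 2) {c : Fin ℓ → K}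
    (hc : c ∈ A.hyps) :
    ∃ d' θ', IsGoodBasis A (Function.update m c (m c + 1)) d' θ' := by
  obtain ⟨c', hc', hnot, hspan⟩ := exists_span_pair hr hc
  set U := (Submodule.span K (A.hyps : Set (Fin ℓ → K))).map linFormHom
  have hmemU : ∀ {x}, x ∈ A.hyps → linForm x ∈ U := fun hx => ⟨_, Submodule.subset_span hx, rfl⟩
  choose g hg using fun i => h.basis.1 i c hc
  have hdich : ∀ i, linForm c ∣ g i ∨ m c ≤ d i ∧ ∃ a : K, a ≠ 0 ∧
      linForm c ∣ g i - C a * linForm c' ^ (d i - m c) := fun i =>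
    dvd_or_exists_of_pow_mul_mem (A.ne_zero c hc) hnot (m c) (d i) <| by
      rw [← hg, ← hspan]; exact h.mem_pow i c hc
  by_cases hall : ∀ i, linForm c ∣ g i
  · refine ⟨d, θ, h.homog, ⟨fun i => (isLogDer_update_iff hc).mpr ⟨h.basis.1 i, ?_⟩,
      fun η hη => h.basis.2 η ((isLogDer_update_iff hc).mp hη).1⟩, h.mem_pow⟩
    rw [hg, pow_succ]
    exact mul_dvd_mul_left _ (hall i)
  push Not at hall
  obtain ⟨i₀, hi₀, hmin⟩ := Finset.exists_min_image
    (Finset.univ.filter fun i => ¬ linForm c ∣ g i) d (by simpa [Finset.Nonempty] using hall)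
  simp only [Finset.mem_filter, Finset.mem_univ, true_and] at hi₀ hmin
  obtain ⟨hm₀, a₀, ha₀, hga₀⟩ := (hdich i₀).resolve_left hi₀
  have hs : ∀ i, ∃ s : S K ℓ, linForm c ∣ g i - s * g i₀ ∧
      (s = 0 ∨ d i₀ ≤ d i ∧ s ∈ U ^ (d i - d i₀)) := by
    intro i
    by_cases hi : linForm c ∣ g i
    · exact ⟨0, by simpa using hi, Or.inl rfl⟩
    obtain ⟨hmi, a, ha, hga⟩ := (hdich i).resolve_left hi
    have hle := hmin i hi
    refine ⟨C (a / a₀) * linForm c' ^ (d i - d i₀), ?_, Or.inr ⟨hle, ?_⟩⟩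
    · have hsplit : C a * linForm c' ^ (d i - m c) =
          C (a / a₀) * linForm c' ^ (d i - d i₀) * (C a₀ * linForm c' ^ (d i₀ - m c)) := by
        rw [show d i - m c = (d i - d i₀) + (d i₀ - m c) by omega, pow_add,
          show C a = (C (a / a₀) * C a₀ : S K ℓ) by rw [← C_mul, div_mul_cancel₀ _ ha₀]]
        ring
      rw [hsplit] at hga
      convert dvd_sub hga (hga₀.mul_left (C (a / a₀) * linForm c' ^ (d i - d i₀))) using 1
      ring
    · rw [← smul_eq_C_mul]
      exact Submodule.smul_mem _ _ (Submodule.pow_mem_pow _ (hmemU hc') _)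
  choose s hsg hsd using hs
  refine ⟨Function.update d i₀ (d i₀ + 1), stepBasis θ i₀ (linForm c) s, fun i x => ?_,
    isDerBasis_stepBasis h.basis hc hg hi₀ fun i _ => hsg i, fun i x hx => ?_⟩
  · by_cases hi : i = i₀
    · subst hi
      rw [stepBasis, if_pos rfl, Function.update_self, add_comm]
      exact (isHomogeneous_linForm c).mul (h.homog i x)
    · rw [stepBasis, if_neg hi, Function.update_of_ne hi]
      rcases hsd i with h0 | ⟨hle, hmem⟩
      · simpa [h0] using h.homog i x
      · refine (h.homog i x).sub ?_
        have := (isHomogeneous_of_mem_pow hmem).mul (h.homog i₀ x)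
        rwa [Nat.sub_add_cancel hle] at this
  · by_cases hi : i = i₀
    · subst hi
      rw [stepBasis, if_pos rfl, Function.update_self, pow_succ']
      exact Submodule.mul_mem_mul (hmemU hc) (h.mem_pow i x hx)
    · rw [stepBasis, if_neg hi, Function.update_of_ne hi]
      rcases hsd i with h0 | ⟨hle, hmem⟩
      · simpa [h0] using h.mem_pow i x hx
      · refine Submodule.sub_mem _ (h.mem_pow i x hx) ?_
        have := Submodule.mul_mem_mul hmem (h.mem_pow i₀ x hx)
        rwa [← pow_add, Nat.sub_add_cancel hle] at this

lemma exists_isGoodBasis {A : Arrangement K ℓ} (hr : rank A = 2) (m : (Fin ℓ → K) → ℕ) :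
    ∃ d θ, IsGoodBasis A m d θ := by
  induction hn : msum A m generalizing m with
  | zero => exact ⟨_, _, isGoodBasis_dualDer (Finset.sum_eq_zero_iff.mp hn)⟩
  | succ n ih =>
    obtain ⟨c, hc, hmc⟩ : ∃ c ∈ A.hyps, m c ≠ 0 := by
      by_contra! hcon
      rw [msum, Finset.sum_eq_zero hcon] at hn
      omega
    obtain ⟨d, θ, h⟩ := ih (Function.update m c (m c - 1)) <| by
      rw [msum, ← Finset.add_sum_erase _ _ hc] at hn ⊢
      rw [Function.update_self, Finset.sum_congr rfl fun x hx =>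
        Function.update_of_ne (Finset.ne_of_mem_erase hx) _ _]
      omega
    have := h.exists_update hr hc
    rwa [Function.update_self, Nat.sub_add_cancel (Nat.pos_of_ne_zero hmc),
      Function.update_idem, Function.update_eq_self] at this

lemma exists_basis_pair {c₁ c₂ : Fin ℓ → K} (h : LinearIndependent K ![c₁, c₂]) :
    ∃ (b : Module.Basis (Fin ℓ) K (Fin ℓ → K)) (i₁ i₂ : Fin ℓ), b i₁ = c₁ ∧ b i₂ = c₂ := by
  have hs : LinearIndepOn K id ({c₁, c₂} : Set (Fin ℓ → K)) := by
    rw [← Matrix.range_cons_cons_empty c₁ c₂ ![]]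
    exact h.linearIndepOn_id
  let b := Module.Basis.extend hs
  let e := b.indexEquiv (Pi.basisFun K (Fin ℓ))
  have hsub := hs.subset_extend (Set.subset_univ _)
  refine ⟨b.reindex e, e ⟨c₁, hsub (by simp)⟩, e ⟨c₂, hsub (by simp)⟩, ?_, ?_⟩ <;>
    simp [b]

lemma exists_isFreeWithExp_pair {A : Arrangement K ℓ} (m : (Fin ℓ → K) → ℕ)
    {c₁ c₂ : Fin ℓ → K} (hne : c₁ ≠ c₂) (hA : A.hyps = {c₁, c₂}) :
    ∃ d : Fin ℓ → ℕ, IsFreeWithExp A m d ∧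
      Finset.univ.val.map d = m c₁ ::ₘ m c₂ ::ₘ Multiset.replicate (ℓ - 2) 0 := by
  have h₁ : c₁ ∈ A.hyps := by simp [hA]
  have h₂ : c₂ ∈ A.hyps := by simp [hA]
  obtain ⟨b, i₁, i₂, rfl, rfl⟩ := exists_basis_pair <|
    (LinearIndependent.pair_iff' (A.ne_zero c₁ h₁)).mpr fun t ht =>
      A.nonparallel c₁ h₁ c₂ h₂ hne t ht.symm
  have hi : i₁ ≠ i₂ := fun h => hne (by rw [h])
  let d : Fin ℓ → ℕ := fun i => if i = i₁ ∨ i = i₂ then m (b i) else 0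
  refine ⟨d, ⟨_, fun i => isHomogOfDeg_dualDer b (d i) i, isDerBasis_dualDer b d fun η => ?_⟩, ?_⟩
  · simp only [IsLogDer, hA, Finset.mem_insert, Finset.mem_singleton, d]
    constructor
    · intro h i
      split_ifs with hi'
      · exact h _ (hi'.imp (congrArg b) (congrArg b))
      · simp
    · rintro h _ (rfl | rfl)
      · simpa using h i₁
      · simpa using h i₂
  · have huniv : (Finset.univ : Finset (Fin ℓ)).val =
        i₁ ::ₘ i₂ ::ₘ ((Finset.univ.erase i₁).erase i₂).val := by
      rw [← Finset.insert_val_of_notMem (by simp), Finset.insert_erase (by simp [hi.symm]),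
        ← Finset.insert_val_of_notMem (by simp), Finset.insert_erase (by simp)]
    have hrest : ((Finset.univ.erase i₁).erase i₂).val.map d = Multiset.replicate (ℓ - 2) 0 := by
      rw [Multiset.eq_replicate]
      constructor
      · rw [Multiset.card_map, Finset.card_val, Finset.card_erase_of_mem (by simp [hi.symm]),
          Finset.card_erase_of_mem (by simp), Finset.card_univ, Fintype.card_fin, Nat.sub_sub]
      · intro x hx
        obtain ⟨i, hi', rfl⟩ := Multiset.mem_map.mp hx
        simp only [Finset.mem_val, Finset.mem_erase, Finset.mem_univ, and_true] at hi'
        simp [d, hi'.1, hi'.2]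
    rw [huniv, Multiset.map_cons, Multiset.map_cons, hrest]
    simp [d]

theorem stmt7 (A : Arrangement K ℓ) (m : (Fin ℓ → K) → ℕ)
    (hm : ∀ c ∈ A.hyps, 0 < m c) (hr : rank A = 2) :
    IsFree A m ∧ ∀ c₁ c₂ : Fin ℓ → K, c₁ ≠ c₂ → A.hyps = {c₁, c₂} →
      ∃ d : Fin ℓ → ℕ, IsFreeWithExp A m d ∧
        Finset.univ.val.map d = m c₁ ::ₘ m c₂ ::ₘ Multiset.replicate (ℓ - 2) 0 := by
  refine ⟨?_, fun c₁ c₂ hne hA => exists_isFreeWithExp_pair m hne hA⟩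
  obtain ⟨d, θ, h⟩ := exists_isGoodBasis hr m
  exact ⟨d, θ, h.homog, h.basis⟩

end ArrPaper
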